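/- Let k ∈ {0,1}, let F : ℝ × ℝ^{d+1} → ℝ be C¹ with F(0,0) = 0, and let f, g ∈ ℓ^{2,k}(ℤ^d). Consider the semilinear wave equation ∂_t² u − Δu = F(u,u') on ℤ^d with small initial data u(·,0) = εf, ∂_t u(·,0) = εg. Then there exist δ > 0 and a constant K > 0 (depending on f, g, d, F) such that for every 0 < ε < δ the maximal existence time satisfies T*(ε) ≥ K·√(log(1/ε)). -/

import Mathlib

/-!
On the lattice the equation is an ordinary differential equation in a Banach space: writing
`u = ⟨·⟩^{-k} a` and `∂ₜu = ⟨·⟩^{-k} b` with `a, b ∈ ℓ²`, it reads `(a, b)' = G(a, b)` on `ℓ² × ℓ²`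
with `G(a, b) = (b, Δa + N(a, b))`, where `Δ` and `∂ⱼ` are conjugated by the weight.

* `Δ` and `∂ⱼ` are bounded on `ℓ^{2,k}` (`exists_lap`, `exists_pd`). For `∂ⱼ` and `k = 1` the
  commutator with the weight has a kernel of size `1/|a|`, which is not summable. The Schur test
  `schur` still applies, with the factorisation `|K(m,n)|² ≤ α(m,n) β(m,n)`, where on the line through
  `m` and `n` in direction `j` one takes `α = ⟨mⱼ-nⱼ⟩⁻² + ⟨nⱼ⟩⁻²` and `β = 8 ⟨mⱼ-nⱼ⟩⁻²`.
* `F` is Lipschitz on the unit ball, so its composition with the radial retraction is globally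
  Lipschitz and vanishes at `0`; it thus acts on `ℓ^{2,k}` with a Lipschitz bound (`exists_nonlin`),
  and `G` becomes globally Lipschitz with some constant `L` and `G(0) = 0`.
* Composing `G` with the retraction of `ℓ² × ℓ²` makes it bounded, so that Picard–Lindelöf applies on
  all of `[0, T]`, and Grönwall gives `‖x(t)‖ ≤ ε ‖x₀‖ e^{LT}` (`ode_exists`).
* For `T < K √log(1/ε)` with `K = 1/(2L)` and small `ε` this bound is so small (`time_scale`) that
  neither retraction is active along the solution, which therefore solves the original equation.
-/

open scoped BigOperators ENNReal NNReal
open MeasureTheory Filter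

noncomputable section

/-- Kernel `φⱼ` of the discrete partial derivative on `ℤ^d`:
`φⱼ(m) = -4i/(π(4a²-1))` if `m = a·eⱼ`, and `0` otherwise. -/
def phi (d : ℕ) (j : Fin d) (m : Fin d → ℤ) : ℂ :=
  if ∀ i, i ≠ j → m i = 0 then
    (-4 * Complex.I) / ((Real.pi : ℂ) * (4 * (m j : ℂ) ^ 2 - 1))
  else 0

/-- Discrete convolution on `ℤ^d`. -/
def dconv {d : ℕ} (u v : (Fin d → ℤ) → ℂ) (k : Fin d → ℤ) : ℂ :=
  ∑' m, u m * v (k - m)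

/-- Discrete partial derivative `∂ⱼ u = u ∗ φⱼ`. -/
def pd {d : ℕ} (j : Fin d) (u : (Fin d → ℤ) → ℂ) : (Fin d → ℤ) → ℂ :=
  dconv u (phi d j)

/-- Japanese bracket `⟨m⟩ = (1+|m|²)^{1/2}`. -/
def jap {d : ℕ} (m : Fin d → ℤ) : ℝ :=
  Real.sqrt (1 + ∑ i, ((m i : ℝ)) ^ 2)

open scoped Classical in
/-- `ℓ^p` norm on `ℤ^d` (valued in `ℝ≥0∞`), `1 ≤ p ≤ ∞`. -/
def lpn {d : ℕ} (p : ℝ≥0∞) (f : (Fin d → ℤ) → ℂ) : ℝ≥0∞ :=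
  if p = ⊤ then ⨆ m, (‖f m‖₊ : ℝ≥0∞)
  else (∑' m, (‖f m‖₊ : ℝ≥0∞) ^ p.toReal) ^ (1 / p.toReal)

/-- Weighted `ℓ^{2,k}` norm: the `ℓ²` norm of `m ↦ ⟨m⟩^k f(m)`. -/
def w2 {d : ℕ} (k : ℕ) (f : (Fin d → ℤ) → ℂ) : ℝ≥0∞ :=
  lpn 2 (fun m => ((jap m ^ k : ℝ) : ℂ) * f m)

/-- Discrete Laplacian on `ℤ^d`. -/
def lap {d : ℕ} (u : (Fin d → ℤ) → ℂ) (x : Fin d → ℤ) : ℂ :=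
  ∑ j, (u (x + Pi.single j 1) + u (x - Pi.single j 1) - 2 * u x)

/-- Continuity of a curve `t ↦ f(·,t)` into `ℓ^{2,k}(ℤ^d)` on a set `S` of times. -/
def ContW {d : ℕ} (k : ℕ) (S : Set ℝ) (f : ℝ → (Fin d → ℤ) → ℂ) : Prop :=
  ∀ t ∈ S, Tendsto (fun s => w2 k (fun m => f s m - f t m))
    (nhdsWithin t S) (nhds (0 : ℝ≥0∞))

/-- `f'` is the derivative (in the `ℓ^{2,k}(ℤ^d)` norm) of the curve `t ↦ f(·,t)` on `S`. -/
def DerivW {d : ℕ} (k : ℕ) (S : Set ℝ) (f f' : ℝ → (Fin d → ℤ) → ℂ) : Prop :=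
  ∀ t ∈ S, Tendsto
    (fun s => w2 k (fun m => (s - t)⁻¹ • (f s m - f t m) - f' t m))
    (nhdsWithin t (S \ {t})) (nhds (0 : ℝ≥0∞))

/-- `u ∈ C²(S; ℓ^{2,k}(ℤ^d))`, with first and second time derivatives `u1`, `u2`. -/
structure IsC2 {d : ℕ} (k : ℕ) (S : Set ℝ) (u u1 u2 : ℝ → (Fin d → ℤ) → ℂ) : Prop where
  mem0 : ∀ t ∈ S, w2 k (u t) < ⊤
  mem1 : ∀ t ∈ S, w2 k (u1 t) < ⊤
  mem2 : ∀ t ∈ S, w2 k (u2 t) < ⊤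
  cont0 : ContW k S u
  cont1 : ContW k S u1
  cont2 : ContW k S u2
  hder1 : DerivW k S u u1
  hder2 : DerivW k S u1 u2

/-- The pointwise state `(u, u') = (u, ∂ₜu, ∂₁u, …, ∂_d u)` of a solution. -/
def state {d : ℕ} (u u1 : ℝ → (Fin d → ℤ) → ℂ) (t : ℝ) (x : Fin d → ℤ) :
    ℂ × (Fin (d + 1) → ℂ) :=
  (u t x, Fin.cons (u1 t x) fun i => pd i (u t) x)

/-- `u` (with time derivatives `u1`, `u2`) is a classical solution in
`C²(S; ℓ^{2,k}(ℤ^d))` of the semilinear wave equation `∂ₜ²u - Δu = F(u,u')`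
with data `u(·,0)=f`, `∂ₜu(·,0)=g`. -/
def SLSol (d k : ℕ) (F : ℂ × (Fin (d + 1) → ℂ) → ℂ) (f g : (Fin d → ℤ) → ℂ)
    (S : Set ℝ) (u u1 u2 : ℝ → (Fin d → ℤ) → ℂ) : Prop :=
  IsC2 k S u u1 u2 ∧
    (∀ t ∈ S, ∀ x, u2 t x - lap (u t) x = F (state u u1 t x)) ∧
    (∀ x, u 0 x = f x) ∧ (∀ x, u1 0 x = g x)

/-! ### The space `ℓ²` and a Schur test -/

/-- The space `ℓ²(ι)`. With `ι = ℤ^d`, a weighted function `u ∈ ℓ^{2,k}` is represented in it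
by `⟨·⟩^k u`. -/
abbrev Eℓ (ι : Type*) := lp (fun _ : ι => ℂ) 2

lemma memlp_two_iff {ι : Type*} (h : ι → ℂ) : Memℓp h 2 ↔ ∑' m, ‖h m‖ₑ ^ 2 < ⊤ := by
  rw [memℓp_gen_iff (by norm_num)]
  have e : ∀ m, ‖h m‖ₑ ^ 2 = ((‖h m‖₊ ^ 2 : ℝ≥0) : ℝ≥0∞) := by
    intro m; simp [enorm_eq_nnnorm]
  simp_rw [e]
  rw [lt_top_iff_ne_top, ENNReal.tsum_coe_ne_top_iff_summable, ← NNReal.summable_coe]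
  simp

lemma enorm_sq_eq {ι : Type*} (a : Eℓ ι) : ‖a‖ₑ ^ 2 = ∑' m, ‖a m‖ₑ ^ 2 := by
  have h1 := lp.norm_rpow_eq_tsum (p := 2) (by norm_num) a
  have hs : Summable (fun m => ‖a m‖ ^ 2) := by
    simpa using (memℓp_gen_iff (by norm_num)).1 (lp.memℓp a)
  have e : ∀ m, ‖a m‖ₑ ^ 2 = ENNReal.ofReal (‖a m‖ ^ 2) := by
    intro m; rw [ENNReal.ofReal_pow (norm_nonneg _), ofReal_norm]
  simp_rw [e]
  rw [← ENNReal.ofReal_tsum_of_nonneg (fun _ => by positivity) hs, ← ofReal_norm,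
    ← ENNReal.ofReal_pow (norm_nonneg _)]
  congr 1
  simpa using h1

lemma tsum_cauchy_schwarz {ι : Type*} (f g : ι → ℝ≥0∞) :
    (∑' n, f n ^ (1 / 2 : ℝ) * g n ^ (1 / 2 : ℝ)) ^ 2 ≤ (∑' n, f n) * ∑' n, g n := by
  let _ : MeasurableSpace ι := ⊤
  have h := ENNReal.lintegral_mul_norm_pow_le (μ := Measure.count) (f := f) (g := g)
    (p := 1 / 2) (q := 1 / 2) (measurable_from_top.aemeasurable) (measurable_from_top.aemeasurable)
    (by norm_num) (by norm_num) (by norm_num)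
  simp only [lintegral_count] at h
  refine (pow_le_pow_left' h 2).trans_eq ?_
  rw [mul_pow, ← ENNReal.rpow_natCast, ← ENNReal.rpow_natCast, ← ENNReal.rpow_mul,
    ← ENNReal.rpow_mul]
  norm_num

/-- Schur test: a kernel with `|K(m,n)|² ≤ α(m,n) β(m,n)`, where the rows of `α` and the columns
of `β` have bounded sums, acts boundedly on `ℓ²`. -/
lemma schur {ι : Type*} (K : ι → ι → ℂ) (α β : ι → ι → ℝ≥0∞) (A B : ℝ≥0)
    (hK : ∀ m n, ‖K m n‖ₑ ^ 2 ≤ α m n * β m n)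
    (hA : ∀ m, ∑' n, α m n ≤ A) (hB : ∀ n, ∑' m, β m n ≤ B) :
    ∃ T : Eℓ ι →L[ℝ] Eℓ ι, ∀ a m, T a m = ∑' n, K m n * a n := by
  have key : ∀ (a : Eℓ ι) m,
      (∑' n, ‖K m n * a n‖ₑ) ^ 2 ≤ A * ∑' n, β m n * ‖a n‖ₑ ^ 2 := by
    intro a m
    refine le_trans (pow_le_pow_left' (ENNReal.tsum_le_tsum fun n => ?_) 2)
      ((tsum_cauchy_schwarz (α m) (fun n => β m n * ‖a n‖ₑ ^ 2)).trans (by gcongr; exact hA m))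
    rw [← ENNReal.mul_rpow_of_nonneg _ _ (by norm_num), ← mul_assoc]
    calc ‖K m n * a n‖ₑ = ((‖K m n‖ₑ * ‖a n‖ₑ) ^ 2) ^ (1 / 2 : ℝ) := by
          rw [enorm_mul, ← ENNReal.rpow_natCast, ← ENNReal.rpow_mul]; norm_num
      _ ≤ _ := by
          rw [mul_pow]
          gcongr
          exact hK m n
  have tot : ∀ a : Eℓ ι, ∑' m, (∑' n, ‖K m n * a n‖ₑ) ^ 2 ≤ A * B * ‖a‖ₑ ^ 2 := by
    intro a
    calc _ ≤ ∑' m, A * ∑' n, β m n * ‖a n‖ₑ ^ 2 := ENNReal.tsum_le_tsum (key a)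
      _ = A * ∑' n, (∑' m, β m n) * ‖a n‖ₑ ^ 2 := by
          rw [ENNReal.tsum_mul_left, ENNReal.tsum_comm]
          simp_rw [ENNReal.tsum_mul_right]
      _ ≤ A * ∑' n, B * ‖a n‖ₑ ^ 2 := by
          gcongr with n
          exact hB n
      _ = _ := by rw [ENNReal.tsum_mul_left, enorm_sq_eq, mul_assoc]
  have fin : ∀ a : Eℓ ι, (A * B * ‖a‖ₑ ^ 2 : ℝ≥0∞) < ⊤ := fun a =>
    ENNReal.mul_lt_top (ENNReal.mul_lt_top (by simp) (by simp)) (by simp)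
  have summ : ∀ (a : Eℓ ι) m, Summable (fun n => K m n * a n) := by
    intro a m
    have h := ENNReal.ne_top_of_tsum_ne_top (((tot a).trans_lt (fin a)).ne) m
    have h2 : ∑' n, ‖K m n * a n‖ₑ ≠ ⊤ := by simpa using h
    simp_rw [enorm_eq_nnnorm] at h2
    rw [ENNReal.tsum_coe_ne_top_iff_summable] at h2
    exact Summable.of_nnnorm h2
  have pt : ∀ (a : Eℓ ι), ∑' m, ‖∑' n, K m n * a n‖ₑ ^ 2 ≤ A * B * ‖a‖ₑ ^ 2 := by
    intro a
    refine (ENNReal.tsum_le_tsum fun m => ?_).trans (tot a)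
    gcongr
    exact enorm_tsum_le_tsum_enorm
  let T0 : Eℓ ι →ₗ[ℝ] Eℓ ι :=
    { toFun := fun a => ⟨fun m => ∑' n, K m n * a n,
        (memlp_two_iff _).2 ((pt a).trans_lt (fin a))⟩
      map_add' := by
        intro a b
        ext m
        change ∑' n, K m n * (a + b : Eℓ ι) n = ∑' n, K m n * a n + ∑' n, K m n * b n
        rw [← (summ a m).tsum_add (summ b m)]
        simp [mul_add]
      map_smul' := by
        intro c a
        ext m
        change ∑' n, K m n * (c • a : Eℓ ι) n = (c : ℝ) • ∑' n, K m n * a n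
        rw [← (summ a m).tsum_const_smul]
        simp [mul_left_comm] }
  refine ⟨T0.mkContinuous (Real.sqrt (A * B)) ?_, fun a m => rfl⟩
  intro a
  have h : ‖T0 a‖ₑ ^ 2 ≤ A * B * ‖a‖ₑ ^ 2 := by
    rw [enorm_sq_eq]; exact pt a
  have h2 : ‖T0 a‖ ^ 2 ≤ A * B * ‖a‖ ^ 2 := by
    rw [enorm_eq_nnnorm, enorm_eq_nnnorm] at h
    exact_mod_cast h
  rw [← Real.sqrt_sq (norm_nonneg a), ← Real.sqrt_mul (by positivity)]
  exact Real.le_sqrt_of_sq_le h2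

/-! ### Globally Lipschitz differential equations -/

/-- The retraction onto the closed unit ball along rays from the origin. -/
def retr {X : Type*} [NormedAddCommGroup X] [NormedSpace ℝ X] (x : X) : X :=
  (max 1 ‖x‖)⁻¹ • x

section retr
variable {X : Type*} [NormedAddCommGroup X] [NormedSpace ℝ X]

lemma retr_of_le {x : X} (h : ‖x‖ ≤ 1) : retr x = x := by
  simp [retr, max_eq_left h]

lemma norm_retr_le_one (x : X) : ‖retr x‖ ≤ 1 := by
  have h : 0 < max 1 ‖x‖ := lt_max_of_lt_left one_pos
  rw [retr, norm_smul, norm_inv, Real.norm_of_nonneg h.le, inv_mul_le_one₀ h]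
  exact le_max_right _ _

lemma norm_retr_le (x : X) : ‖retr x‖ ≤ ‖x‖ := by
  have h : 0 < max 1 ‖x‖ := lt_max_of_lt_left one_pos
  rw [retr, norm_smul, norm_inv, Real.norm_of_nonneg h.le]
  exact mul_le_of_le_one_left (norm_nonneg _) (inv_le_one_of_one_le₀ (le_max_left _ _))

lemma retr_lipschitz : LipschitzWith 2 (retr : X → X) := by
  refine LipschitzWith.of_dist_le_mul fun x y => ?_
  rw [dist_eq_norm, dist_eq_norm]
  set M := max 1 ‖x‖ with hM
  set N := max 1 ‖y‖ with hN
  have hM1 : 1 ≤ M := le_max_left _ _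
  have hN1 : 1 ≤ N := le_max_left _ _
  have hyN : ‖y‖ ≤ N := le_max_right _ _
  have hd : |N - M| ≤ ‖x - y‖ := by
    refine (abs_max_sub_max_le_max 1 ‖y‖ 1 ‖x‖).trans ?_
    simp only [sub_self, abs_zero]
    rw [norm_sub_rev]
    exact max_le (norm_nonneg _) (abs_norm_sub_norm_le y x)
  have e : retr x - retr y = M⁻¹ • (x - y) + (M⁻¹ - N⁻¹) • y := by
    simp only [retr, ← hM, ← hN, smul_sub, sub_smul]; abel
  have e2 : M⁻¹ - N⁻¹ = (N - M) * (M⁻¹ * N⁻¹) := by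
    have : M ≠ 0 := by positivity
    have : N ≠ 0 := by positivity
    field_simp
  have h1 : ‖M⁻¹ • (x - y)‖ ≤ ‖x - y‖ := by
    rw [norm_smul, norm_inv, Real.norm_of_nonneg (by positivity)]
    exact mul_le_of_le_one_left (norm_nonneg _) (inv_le_one_of_one_le₀ hM1)
  have h2 : ‖(M⁻¹ - N⁻¹) • y‖ ≤ ‖x - y‖ := by
    rw [norm_smul, e2, norm_mul, Real.norm_eq_abs,
      Real.norm_of_nonneg (by positivity : 0 ≤ M⁻¹ * N⁻¹), mul_assoc]
    refine (mul_le_of_le_one_right (abs_nonneg _) ?_).trans hd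
    have a1 : M⁻¹ ≤ 1 := inv_le_one_of_one_le₀ hM1
    have a2 : N⁻¹ * ‖y‖ ≤ 1 := by
      rw [inv_mul_le_one₀ (by positivity)]; exact hyN
    rw [mul_assoc]
    exact mul_le_one₀ a1 (by positivity) a2
  rw [e]
  push_cast
  linarith [norm_add_le (M⁻¹ • (x - y)) ((M⁻¹ - N⁻¹) • y)]

end retr

/-- A globally Lipschitz autonomous field vanishing at `0` has a solution on `[0,T]` bounded by
`‖x₀‖ e^{LT}`, provided that this bound is at most `1`. -/
lemma ode_exists {X : Type*} [NormedAddCommGroup X] [NormedSpace ℝ X] [CompleteSpace X]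
    (G : X → X) (L : ℝ≥0) (hG : LipschitzWith L G) (hG0 : G 0 = 0) (x0 : X) (T : ℝ) (hT : 0 < T)
    (hx0 : ‖x0‖ * Real.exp (L * T) ≤ 1) :
    ∃ x : ℝ → X, x 0 = x0 ∧ ∀ t ∈ Set.Icc 0 T,
      HasDerivWithinAt x (G (x t)) (Set.Icc 0 T) t ∧ ‖x t‖ ≤ ‖x0‖ * Real.exp (L * T) := by
  have hb : ∀ y, ‖G y‖ ≤ L * ‖y‖ := fun y => by
    simpa [dist_eq_norm, hG0] using hG.dist_le_mul y 0
  -- composing with the retraction makes the field bounded, so one Picard iteration covers `[0,T]`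
  have hPL : IsPicardLindelof (fun _ => G ∘ retr) (tmin := 0) (tmax := T)
      ⟨0, le_refl 0, hT.le⟩ x0 (L * T.toNNReal) 0 L (L * 2) :=
    { lipschitzOnWith := fun t _ => (hG.comp retr_lipschitz).lipschitzOnWith
      continuousOn := fun x _ => continuousOn_const
      norm_le := fun t _ x _ => by
        refine (hb _).trans ?_
        exact mul_le_of_le_one_right L.2 (norm_retr_le_one x)
      mul_max_le := by simp [hT.le] }
  obtain ⟨x, hx, hd⟩ := hPL.exists_eq_forall_mem_Icc_hasDerivWithinAt₀
  have hx' : x 0 = x0 := hx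
  have hcont : ContinuousOn x (Set.Icc 0 T) := fun t ht => (hd t ht).continuousWithinAt
  have hgr : ∀ t ∈ Set.Icc 0 T, ‖x t‖ ≤ ‖x0‖ * Real.exp (L * T) := by
    intro t ht
    have h := norm_le_gronwallBound_of_norm_deriv_right_le (δ := ‖x0‖) (K := L) (ε := 0) hcont
      (f' := fun t => (G ∘ retr) (x t)) (fun s hs =>
        (hd s ⟨hs.1, hs.2.le⟩).mono_of_mem_nhdsWithin (Icc_mem_nhdsGE_of_mem hs))
      (by rw [hx']) (fun s _ => by
        rw [add_zero]
        exact (hb _).trans (mul_le_mul_of_nonneg_left (norm_retr_le _) L.2)) t ht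
    rw [gronwallBound_ε0] at h
    refine h.trans ?_
    gcongr
    linarith [ht.2]
  refine ⟨x, hx', fun t ht => ⟨?_, hgr t ht⟩⟩
  have := hd t ht
  simpa [retr_of_le ((hgr t ht).trans hx0)] using this

/-! ### Weights, `∂ⱼ` and `Δ` as bounded operators -/

lemma jap_sq {d : ℕ} (m : Fin d → ℤ) : jap m ^ 2 = 1 + ∑ i, ((m i : ℝ)) ^ 2 :=
  Real.sq_sqrt (by positivity)

lemma one_le_jap {d : ℕ} (m : Fin d → ℤ) : 1 ≤ jap m := by
  rw [jap, Real.one_le_sqrt]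
  linarith [Finset.sum_nonneg (fun i (_ : i ∈ Finset.univ) => sq_nonneg (m i : ℝ))]

lemma one_le_japk {d : ℕ} (k : ℕ) (m : Fin d → ℤ) : 1 ≤ jap m ^ k := one_le_pow₀ (one_le_jap m)

lemma japk_pos {d : ℕ} (k : ℕ) (m : Fin d → ℤ) : 0 < jap m ^ k :=
  one_pos.trans_le (one_le_japk k m)

lemma japk_ne {d : ℕ} (k : ℕ) (m : Fin d → ℤ) : ((jap m ^ k : ℝ) : ℂ) ≠ 0 :=
  Complex.ofReal_ne_zero.2 (ne_of_gt (japk_pos k m))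

/-- Peetre's inequality for the Japanese bracket. -/
lemma jap_shift {d : ℕ} (m e : Fin d → ℤ) : jap m ^ 2 ≤ 2 * jap e ^ 2 * jap (m + e) ^ 2 := by
  simp only [jap_sq]
  have h1 : ∑ i, ((m i : ℝ)) ^ 2 ≤ 2 * ∑ i, (((m + e) i : ℤ) : ℝ) ^ 2 + 2 * ∑ i, ((e i : ℝ)) ^ 2 := by
    rw [Finset.mul_sum, Finset.mul_sum, ← Finset.sum_add_distrib]
    refine Finset.sum_le_sum fun i _ => ?_
    push_cast [Pi.add_apply]
    nlinarith [sq_nonneg ((m i : ℝ) + 2 * e i)]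
  have a := Finset.sum_nonneg (fun i (_ : i ∈ Finset.univ) => sq_nonneg (e i : ℝ))
  have b := Finset.sum_nonneg (fun i (_ : i ∈ Finset.univ) => sq_nonneg (((m + e) i : ℤ) : ℝ))
  nlinarith [mul_nonneg a b]

lemma jap_line {d : ℕ} (j : Fin d) (m n : Fin d → ℤ) (h : ∀ i, i ≠ j → (m - n) i = 0) :
    jap m ^ 2 ≤ 2 * (jap n ^ 2 + (((m - n) j : ℤ) : ℝ) ^ 2) := by
  simp only [jap_sq]
  have h1 : ∑ i, ((m i : ℝ)) ^ 2 ≤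
      ∑ i, (2 * ((n i : ℝ)) ^ 2 + if i = j then 2 * (((m - n) j : ℤ) : ℝ) ^ 2 else 0) := by
    refine Finset.sum_le_sum fun i _ => ?_
    split_ifs with hi
    · subst hi
      push_cast [Pi.sub_apply]
      nlinarith [sq_nonneg ((m i : ℝ) - 2 * n i)]
    · have : m i = n i := by simpa [sub_eq_zero] using h i hi
      rw [this]
      nlinarith [sq_nonneg (n i : ℝ)]
  rw [Finset.sum_add_distrib, Finset.sum_ite_eq' Finset.univ j, ← Finset.mul_sum] at h1
  simp only [Finset.mem_univ, if_true] at h1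
  linarith

lemma le_jap_sq {d : ℕ} (j : Fin d) (n : Fin d → ℤ) : 1 + (n j : ℝ) ^ 2 ≤ jap n ^ 2 := by
  rw [jap_sq]
  gcongr
  exact Finset.single_le_sum (f := fun i => (n i : ℝ) ^ 2) (fun i _ => sq_nonneg _)
    (Finset.mem_univ j)

/-- The decaying profile `1/(1+a²)` on `ℤ`. -/
def prof (a : ℤ) : ℝ := 1 / (1 + (a : ℝ) ^ 2)

lemma prof_pos (a : ℤ) : 0 < prof a := by unfold prof; positivity

lemma summable_prof : Summable prof := by
  have h : Summable (fun a : ℤ => 1 / (a : ℝ) ^ 2) :=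
    Real.summable_one_div_int_pow.2 (by norm_num)
  refine h.of_norm_bounded_eventually ?_
  have : ∀ᶠ a : ℤ in cofinite, a ≠ 0 := (Set.finite_singleton (0 : ℤ)).compl_mem_cofinite
  filter_upwards [this] with a ha
  rw [Real.norm_of_nonneg (prof_pos a).le]
  unfold prof
  have : (0 : ℝ) < (a : ℝ) ^ 2 := by positivity
  gcongr
  linarith

/-- The sum of `prof` over `ℤ`. -/
def profSum : ℝ≥0 := (∑' a, prof a).toNNReal

lemma tsum_prof : ∑' a, ENNReal.ofReal (prof a) = profSum := by
  rw [← ENNReal.ofReal_tsum_of_nonneg (fun a => (prof_pos a).le) summable_prof]; rfl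

lemma norm_phi_le {d : ℕ} (j : Fin d) (m : Fin d → ℤ) : ‖phi d j m‖ ≤ 2 * prof (m j) := by
  unfold phi
  split_ifs
  · have e : (Real.pi : ℂ) * (4 * (m j : ℂ) ^ 2 - 1) =
        ((Real.pi * (4 * (m j : ℝ) ^ 2 - 1) : ℝ) : ℂ) := by push_cast; rfl
    rw [norm_div, e, Complex.norm_real, norm_mul, norm_neg, Complex.norm_I, norm_mul,
      Real.norm_of_nonneg Real.pi_pos.le]
    have hq : 1 + (m j : ℝ) ^ 2 ≤ ‖4 * (m j : ℝ) ^ 2 - 1‖ := by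
      rcases eq_or_ne (m j) 0 with h0 | h0
      · simp [h0]
      · have h1 : (1 : ℝ) ≤ (m j : ℝ) ^ 2 := by
          have : 0 < (m j) ^ 2 := by positivity
          have : 1 ≤ (m j) ^ 2 := by linarith
          exact_mod_cast this
        rw [Real.norm_of_nonneg (by linarith)]
        linarith
    have hp := Real.pi_gt_three
    have h0 : 0 < 1 + (m j : ℝ) ^ 2 := by positivity
    have hpos := h0.trans_le hq
    simp only [prof]
    rw [mul_one_div, div_le_div_iff₀ (by positivity) (by positivity)]
    norm_num at hq ⊢
    nlinarith
  · simpa using (prof_pos (m j)).le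

open scoped Classical in
/-- Sums over a coordinate line of `ℤ^d` are sums over `ℤ`. -/
lemma tsum_line {d : ℕ} (j : Fin d) (m : Fin d → ℤ) (h : ℤ → ℝ≥0∞) :
    ∑' n : Fin d → ℤ, (if ∀ i, i ≠ j → n i = m i then h (n j) else 0) = ∑' b, h b := by
  have hinj : Function.Injective (fun b : ℤ => Function.update m j b) :=
    Function.update_injective m j
  rw [← hinj.tsum_eq]
  · refine tsum_congr fun b => ?_
    rw [if_pos]
    · simp
    · intro i hi; simp [hi]
  · intro n hn
    by_cases hc : ∀ i, i ≠ j → n i = m i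
    · refine ⟨n j, ?_⟩
      ext i
      by_cases hi : i = j
      · subst hi; simp
      · simp [hi, hc i hi]
    · simp [hc] at hn

open scoped Classical in
/-- `∂ⱼ` is bounded on `ℓ^{2,k}` for `k ≤ 1`. For `k = 1` the kernel of the conjugated operator
decays only like `1/a` away from the diagonal; the gain `1/⟨n⟩` from the weight is what makes the
row sums of the factor `α` below converge. -/
lemma exists_pd {d : ℕ} (k : ℕ) (hk : k = 0 ∨ k = 1) (j : Fin d) :
    ∃ D : Eℓ (Fin d → ℤ) →L[ℝ] Eℓ (Fin d → ℤ), ∀ a m,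
      D a m = ((jap m ^ k : ℝ) : ℂ) * pd j (fun n => ((jap n ^ k : ℝ) : ℂ)⁻¹ * a n) m := by
  let K : (Fin d → ℤ) → (Fin d → ℤ) → ℂ := fun m n =>
    ((jap m ^ k : ℝ) : ℂ) * (((jap n ^ k : ℝ) : ℂ)⁻¹ * phi d j (m - n))
  let α : (Fin d → ℤ) → (Fin d → ℤ) → ℝ≥0∞ := fun m n =>
    if ∀ i, i ≠ j → n i = m i then
      ENNReal.ofReal (prof (m j - n j)) + ENNReal.ofReal (prof (n j)) else 0
  let β : (Fin d → ℤ) → (Fin d → ℤ) → ℝ≥0∞ := fun m n =>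
    if ∀ i, i ≠ j → m i = n i then 8 * ENNReal.ofReal (prof (m j - n j)) else 0
  refine (schur K α β (profSum + profSum) (8 * profSum) ?_ ?_ ?_).imp fun D hD a m => ?_
  · intro m n
    by_cases hl : ∀ i, i ≠ j → n i = m i
    · have hl' : ∀ i, i ≠ j → m i = n i := fun i hi => (hl i hi).symm
      simp only [α, β, if_pos hl, if_pos hl']
      have hp := prof_pos (m j - n j)
      have hp' := prof_pos (n j)
      have hw : (jap m ^ k) ^ 2 * prof (m j - n j) ≤
          2 * (jap n ^ k) ^ 2 * (prof (m j - n j) + prof (n j)) := by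
        rcases hk with rfl | rfl
        · simp only [pow_zero, one_pow]; linarith
        · simp only [pow_one]
          have h1 := jap_line j m n (fun i hi => by simp [hl' i hi])
          have h2 := le_jap_sq j n
          have e1 : prof (m j - n j) * (1 + (((m - n) j : ℤ) : ℝ) ^ 2) = 1 := by
            unfold prof
            rw [Pi.sub_apply]
            have : (0 : ℝ) < 1 + ((m j - n j : ℤ) : ℝ) ^ 2 := by positivity
            field_simp
          have e2 : prof (n j) * (1 + (n j : ℝ) ^ 2) = 1 := by
            unfold prof
            have : (0 : ℝ) < 1 + (n j : ℝ) ^ 2 := by positivity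
            field_simp
          have h3 := mul_le_mul_of_nonneg_left h2 hp'.le
          have h4 := mul_le_mul_of_nonneg_left h1 hp.le
          nlinarith
      have hphi : ‖phi d j (m - n)‖ ≤ 2 * prof (m j - n j) := norm_phi_le j (m - n)
      have hn := japk_pos k n
      have real : ‖K m n‖ ^ 2 ≤
          (prof (m j - n j) + prof (n j)) * (8 * prof (m j - n j)) := by
        simp only [K, norm_mul, norm_inv, Complex.norm_real,
          Real.norm_of_nonneg (japk_pos k _).le]
        rw [mul_pow, mul_pow, inv_pow]
        have hsq : ‖phi d j (m - n)‖ ^ 2 ≤ 4 * prof (m j - n j) ^ 2 := by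
          have := pow_le_pow_left₀ (norm_nonneg _) hphi 2
          linarith
        calc (jap m ^ k) ^ 2 * (((jap n ^ k) ^ 2)⁻¹ * ‖phi d j (m - n)‖ ^ 2)
            ≤ (jap m ^ k) ^ 2 * (((jap n ^ k) ^ 2)⁻¹ * (4 * prof (m j - n j) ^ 2)) := by gcongr
          _ = ((jap m ^ k) ^ 2 * prof (m j - n j)) *
                (((jap n ^ k) ^ 2)⁻¹ * (4 * prof (m j - n j))) := by ring
          _ ≤ (2 * (jap n ^ k) ^ 2 * (prof (m j - n j) + prof (n j))) *
                (((jap n ^ k) ^ 2)⁻¹ * (4 * prof (m j - n j))) := by gcongr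
          _ = _ := by field_simp; ring
      rw [← ofReal_norm, ← ENNReal.ofReal_pow (norm_nonneg _),
        ← ENNReal.ofReal_add hp.le hp'.le]
      refine (ENNReal.ofReal_le_ofReal real).trans_eq ?_
      rw [ENNReal.ofReal_mul (by positivity), ENNReal.ofReal_mul (by norm_num)]
      norm_num
    · have : phi d j (m - n) = 0 := by
        rw [phi, if_neg]
        intro hc
        exact hl fun i hi => by
          have := hc i hi
          rw [Pi.sub_apply, sub_eq_zero] at this
          exact this.symm
      simp [K, this]
  · intro m
    have := tsum_line j m (fun b => ENNReal.ofReal (prof (m j - b)) + ENNReal.ofReal (prof b))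
    simp only [α]
    have h2 := (Equiv.subLeft (m j)).tsum_eq (fun b => ENNReal.ofReal (prof b))
    simp only [Equiv.subLeft_apply] at h2
    rw [this, ENNReal.tsum_add, h2, tsum_prof]
    simp
  · intro n
    have := tsum_line j n (fun b => 8 * ENNReal.ofReal (prof (b - n j)))
    simp only [β]
    have h2 := (Equiv.subRight (n j)).tsum_eq (fun b => ENNReal.ofReal (prof b))
    simp only [Equiv.subRight_apply] at h2
    rw [this, ENNReal.tsum_mul_left, h2, tsum_prof]
    simp
  · rw [hD, pd, dconv, ← tsum_mul_left]
    refine tsum_congr fun n => ?_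
    simp only [K]; ring

/-- Translations are bounded on `ℓ^{2,k}` for `k ≤ 1`. -/
lemma exists_shift {d : ℕ} (k : ℕ) (hk : k = 0 ∨ k = 1) (e : Fin d → ℤ) :
    ∃ S : Eℓ (Fin d → ℤ) →L[ℝ] Eℓ (Fin d → ℤ), ∀ a m,
      S a m = ((jap m ^ k : ℝ) : ℂ) * (((jap (m + e) ^ k : ℝ) : ℂ)⁻¹ * a (m + e)) := by
  classical
  let C : ℝ≥0 := (2 * jap e ^ 2).toNNReal
  have hC : (C : ℝ) = 2 * jap e ^ 2 := Real.coe_toNNReal _ (by positivity)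
  let K : (Fin d → ℤ) → (Fin d → ℤ) → ℂ := fun m n =>
    if n = m + e then ((jap m ^ k : ℝ) : ℂ) * ((jap n ^ k : ℝ) : ℂ)⁻¹ else 0
  refine (schur K (fun m n => if n = m + e then 1 else 0)
    (fun m n => if m = n - e then C else 0) 1 C ?_ ?_ ?_).imp fun S hS a m => ?_
  · intro m n
    by_cases h : n = m + e
    · subst h
      simp only [K, if_true, add_sub_cancel_right, one_mul]
      have : ‖((jap m ^ k : ℝ) : ℂ) * ((jap (m + e) ^ k : ℝ) : ℂ)⁻¹‖ ^ 2 ≤ C := by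
        rw [norm_mul, norm_inv, Complex.norm_real, Complex.norm_real,
          Real.norm_of_nonneg (japk_pos k _).le, Real.norm_of_nonneg (japk_pos k _).le, hC,
          ← div_eq_mul_inv, div_pow, div_le_iff₀ (pow_pos (japk_pos k _) 2)]
        rcases hk with rfl | rfl
        · have := one_le_jap e
          simp only [pow_zero]
          nlinarith
        · simpa using jap_shift m e
      rw [enorm_eq_nnnorm]
      exact_mod_cast this
    · simp [K, h]
  · intro m
    rw [tsum_ite_eq]; simp
  · intro n
    rw [tsum_ite_eq]
  · rw [hS, tsum_eq_single (m + e)]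
    · simp [K, mul_assoc]
    · intro n hn; simp [K, hn]

/-- The discrete Laplacian is bounded on `ℓ^{2,k}` for `k ≤ 1`. -/
lemma exists_lap {d : ℕ} (k : ℕ) (hk : k = 0 ∨ k = 1) :
    ∃ Λ : Eℓ (Fin d → ℤ) →L[ℝ] Eℓ (Fin d → ℤ), ∀ a m,
      Λ a m = ((jap m ^ k : ℝ) : ℂ) * lap (fun n => ((jap n ^ k : ℝ) : ℂ)⁻¹ * a n) m := by
  choose S hS using fun e : Fin d → ℤ => exists_shift k hk e
  refine ⟨∑ j, (S (Pi.single j 1) + S (-Pi.single j 1)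
    - (2 : ℝ) • ContinuousLinearMap.id ℝ _), fun a m => ?_⟩
  have h := japk_ne k m
  rw [lap, Finset.mul_sum, sum_apply, lp.coeFn_sum, Finset.sum_apply]
  refine Finset.sum_congr rfl fun j _ => ?_
  have : ((S (Pi.single j 1) + S (-Pi.single j 1)
      - (2 : ℝ) • ContinuousLinearMap.id ℝ (Eℓ (Fin d → ℤ))) a) m = S (Pi.single j 1) a m + S (-Pi.single j 1) a m - (2 : ℝ) • a m := rfl
  rw [this, hS, hS, ← sub_eq_add_neg, Complex.real_smul]
  push_cast at h ⊢
  field_simp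

/-! ### The nonlinearity on `ℓ^{2,k}` -/

lemma w2_eq_tsum {d : ℕ} (k : ℕ) (f : (Fin d → ℤ) → ℂ) :
    w2 k f = (∑' m, ‖((jap m ^ k : ℝ) : ℂ) * f m‖ₑ ^ 2) ^ (1 / 2 : ℝ) := by
  simp [w2, lpn, enorm_eq_nnnorm]

lemma memlp_of_w2 {d : ℕ} {k : ℕ} {f : (Fin d → ℤ) → ℂ} (h : w2 k f < ⊤) :
    Memℓp (fun m => ((jap m ^ k : ℝ) : ℂ) * f m) 2 := by
  rw [memlp_two_iff]
  rw [w2_eq_tsum] at h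
  exact (ENNReal.rpow_lt_top_iff_of_pos (by norm_num)).1 h

/-- The `ℓ^{2,k}` norm of `u` is the `ℓ²` norm of its representative `⟨·⟩^k u`. -/
lemma w2_eq_enorm {d : ℕ} {k : ℕ} {f : (Fin d → ℤ) → ℂ} {a : Eℓ (Fin d → ℤ)}
    (h : ∀ m, f m = ((jap m ^ k : ℝ) : ℂ)⁻¹ * a m) : w2 k f = ‖a‖ₑ := by
  have e : ∀ m, ((jap m ^ k : ℝ) : ℂ) * f m = a m := fun m => by
    rw [h, mul_inv_cancel_left₀ (japk_ne k m)]
  rw [w2_eq_tsum]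
  simp_rw [e]
  rw [← enorm_sq_eq, ← ENNReal.rpow_natCast, ← ENNReal.rpow_mul]
  norm_num

/-- The weighted state `⟨m⟩^k (u, ∂ₜu, ∂₁u, …, ∂_d u)(m)`, where `x` represents `(u, ∂ₜu)` and `D`
represents the derivatives. -/
def sig {d : ℕ} (D : Fin d → Eℓ (Fin d → ℤ) →L[ℝ] Eℓ (Fin d → ℤ))
    (x : Eℓ (Fin d → ℤ) × Eℓ (Fin d → ℤ)) (m : Fin d → ℤ) : ℂ × (Fin (d + 1) → ℂ) :=
  (x.1 m, Fin.cons (x.2 m) fun i => D i x.1 m)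

section sig
variable {d : ℕ} (D : Fin d → Eℓ (Fin d → ℤ) →L[ℝ] Eℓ (Fin d → ℤ))

lemma sig_sub (x y : Eℓ (Fin d → ℤ) × Eℓ (Fin d → ℤ)) (m : Fin d → ℤ) :
    sig D x m - sig D y m = sig D (x - y) m := by
  refine Prod.ext rfl ?_
  funext i
  refine Fin.cases rfl (fun i => ?_) i
  simp [sig]

lemma sig_zero (m : Fin d → ℤ) : sig D 0 m = 0 := by
  simpa using (sig_sub D 0 0 m).symm

lemma tsum_sig_le (x : Eℓ (Fin d → ℤ) × Eℓ (Fin d → ℤ)) :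
    ∑' m, ‖sig D x m‖ₑ ^ 2 ≤ ((2 + ∑ i, ‖D i‖₊ ^ 2 : ℝ≥0) : ℝ≥0∞) * ‖x‖ₑ ^ 2 := by
  have h1 : ∀ m, ‖sig D x m‖ₑ ^ 2 ≤ ‖x.1 m‖ₑ ^ 2 + ‖x.2 m‖ₑ ^ 2 + ∑ i, ‖D i x.1 m‖ₑ ^ 2 := by
    intro m
    have hr : ‖sig D x m‖ ≤ Real.sqrt (‖x.1 m‖ ^ 2 + ‖x.2 m‖ ^ 2 + ∑ i, ‖D i x.1 m‖ ^ 2) := by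
      have hn : 0 ≤ ∑ i, ‖D i x.1 m‖ ^ 2 := Finset.sum_nonneg fun i _ => sq_nonneg _
      rw [sig, norm_prod_le_iff, pi_norm_le_iff_of_nonneg (Real.sqrt_nonneg _), Fin.forall_fin_succ]
      refine ⟨Real.le_sqrt_of_sq_le ?_, Real.le_sqrt_of_sq_le ?_,
        fun i => Real.le_sqrt_of_sq_le ?_⟩
      · simp only; nlinarith [sq_nonneg ‖x.2 m‖]
      · simp only [Fin.cons_zero]; nlinarith [sq_nonneg ‖x.1 m‖]
      · simp only [Fin.cons_succ]
        have := Finset.single_le_sum (f := fun i => ‖D i x.1 m‖ ^ 2) (fun i _ => sq_nonneg _)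
          (Finset.mem_univ i)
        simp only at this
        nlinarith [sq_nonneg ‖x.1 m‖, sq_nonneg ‖x.2 m‖]
    have hr3 : ‖sig D x m‖ ^ 2 ≤ ‖x.1 m‖ ^ 2 + ‖x.2 m‖ ^ 2 + ∑ i, ‖D i x.1 m‖ ^ 2 := by
      have := pow_le_pow_left₀ (norm_nonneg _) hr 2
      rwa [Real.sq_sqrt (by positivity)] at this
    have hr4 : ‖sig D x m‖₊ ^ 2 ≤ ‖x.1 m‖₊ ^ 2 + ‖x.2 m‖₊ ^ 2 + ∑ i, ‖D i x.1 m‖₊ ^ 2 := by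
      rw [← NNReal.coe_le_coe]
      push_cast
      exact hr3
    simp only [enorm_eq_nnnorm]
    exact_mod_cast hr4
  calc _ ≤ ∑' m, (‖x.1 m‖ₑ ^ 2 + ‖x.2 m‖ₑ ^ 2 + ∑ i, ‖D i x.1 m‖ₑ ^ 2) :=
        ENNReal.tsum_le_tsum h1
    _ = ‖x.1‖ₑ ^ 2 + ‖x.2‖ₑ ^ 2 + ∑ i, ‖D i x.1‖ₑ ^ 2 := by
        rw [ENNReal.tsum_add, ENNReal.tsum_add,
          Summable.tsum_finsetSum (fun _ _ => ENNReal.summable)]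
        simp only [enorm_sq_eq]
    _ ≤ _ := by
        simp only [enorm_eq_nnnorm]
        have a1 : ‖x.1‖₊ ≤ ‖x‖₊ := norm_fst_le x
        have a2 : ‖x.2‖₊ ≤ ‖x‖₊ := norm_snd_le x
        have a3 : ∑ i, ‖D i x.1‖₊ ^ 2 ≤ (∑ i, ‖D i‖₊ ^ 2) * ‖x‖₊ ^ 2 := by
          rw [Finset.sum_mul]
          refine Finset.sum_le_sum fun i _ => ?_
          rw [← mul_pow]
          gcongr
          exact ((D i).le_opNNNorm _).trans (by gcongr)
        have : ‖x.1‖₊ ^ 2 + ‖x.2‖₊ ^ 2 + ∑ i, ‖D i x.1‖₊ ^ 2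
            ≤ (2 + ∑ i, ‖D i‖₊ ^ 2) * ‖x‖₊ ^ 2 := by
          rw [add_mul, two_mul]
          gcongr
        exact_mod_cast this

lemma norm_sig_le (x : Eℓ (Fin d → ℤ) × Eℓ (Fin d → ℤ)) (m : Fin d → ℤ) :
    ‖sig D x m‖ ≤ NNReal.sqrt (2 + ∑ i, ‖D i‖₊ ^ 2) * ‖x‖ := by
  have h := (ENNReal.le_tsum (f := fun m => ‖sig D x m‖ₑ ^ 2) m).trans (tsum_sig_le D x)
  simp only [enorm_eq_nnnorm] at h
  have h' : ‖sig D x m‖₊ ^ 2 ≤ (2 + ∑ i, ‖D i‖₊ ^ 2) * ‖x‖₊ ^ 2 := by exact_mod_cast h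
  have h2 : ‖sig D x m‖₊ ≤ NNReal.sqrt (2 + ∑ i, ‖D i‖₊ ^ 2) * ‖x‖₊ := by
    rw [← NNReal.sqrt_sq ‖x‖₊, ← NNReal.sqrt_mul]
    exact NNReal.le_sqrt_iff_sq_le.2 h'
  exact NNReal.coe_le_coe.2 h2

/-- A globally Lipschitz nonlinearity vanishing at `0` acts on `ℓ^{2,k}`, with a Lipschitz
bound. -/
lemma exists_nonlin (k : ℕ) (Φ : ℂ × (Fin (d + 1) → ℂ) → ℂ) (c : ℝ≥0) (hΦ : LipschitzWith c Φ)
    (hΦ0 : Φ 0 = 0) :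
    ∃ (N : Eℓ (Fin d → ℤ) × Eℓ (Fin d → ℤ) → Eℓ (Fin d → ℤ)) (c' : ℝ≥0), LipschitzWith c' N ∧
      ∀ x m, N x m = ((jap m ^ k : ℝ) : ℂ) * Φ ((jap m ^ k)⁻¹ • sig D x m) := by
  have hdiff : ∀ x y m,
      ‖((jap m ^ k : ℝ) : ℂ) * Φ ((jap m ^ k)⁻¹ • sig D x m)
        - ((jap m ^ k : ℝ) : ℂ) * Φ ((jap m ^ k)⁻¹ • sig D y m)‖ₑ ≤ c * ‖sig D (x - y) m‖ₑ := by
    intro x y m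
    have hw := japk_pos k m
    have : ‖((jap m ^ k : ℝ) : ℂ) * Φ ((jap m ^ k)⁻¹ • sig D x m)
        - ((jap m ^ k : ℝ) : ℂ) * Φ ((jap m ^ k)⁻¹ • sig D y m)‖ ≤ c * ‖sig D (x - y) m‖ := by
      rw [← mul_sub, norm_mul, Complex.norm_real, Real.norm_of_nonneg hw.le]
      have h := hΦ.dist_le_mul ((jap m ^ k)⁻¹ • sig D x m) ((jap m ^ k)⁻¹ • sig D y m)
      rw [dist_eq_norm, dist_eq_norm, ← smul_sub, sig_sub, norm_smul, norm_inv,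
        Real.norm_of_nonneg hw.le] at h
      refine (mul_le_mul_of_nonneg_left h hw.le).trans_eq ?_
      field_simp
    simp only [enorm_eq_nnnorm]
    exact_mod_cast this
  have htot : ∀ x y, ∑' m, ‖((jap m ^ k : ℝ) : ℂ) * Φ ((jap m ^ k)⁻¹ • sig D x m)
        - ((jap m ^ k : ℝ) : ℂ) * Φ ((jap m ^ k)⁻¹ • sig D y m)‖ₑ ^ 2 ≤
      c ^ 2 * (((2 + ∑ i, ‖D i‖₊ ^ 2 : ℝ≥0) : ℝ≥0∞) * ‖x - y‖ₑ ^ 2) := by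
    intro x y
    calc _ ≤ ∑' m, (c : ℝ≥0∞) ^ 2 * ‖sig D (x - y) m‖ₑ ^ 2 :=
          ENNReal.tsum_le_tsum fun m => by
            rw [← mul_pow]
            exact pow_le_pow_left' (hdiff x y m) 2
      _ ≤ _ := by
          rw [ENNReal.tsum_mul_left]
          gcongr
          exact tsum_sig_le D _
  have hmem : ∀ x, Memℓp (fun m => ((jap m ^ k : ℝ) : ℂ) * Φ ((jap m ^ k)⁻¹ • sig D x m)) 2 := by
    intro x
    rw [memlp_two_iff]
    have h := htot x 0
    simp only [sig_zero, smul_zero, hΦ0, mul_zero, sub_zero] at h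
    refine h.trans_lt ?_
    exact ENNReal.mul_lt_top (by simp) (ENNReal.mul_lt_top ENNReal.coe_lt_top (by simp))
  refine ⟨fun x => ⟨_, hmem x⟩, c * NNReal.sqrt (2 + ∑ i, ‖D i‖₊ ^ 2), ?_, fun x m => rfl⟩
  intro x y
  rw [edist_eq_enorm_sub, edist_eq_enorm_sub]
  have h := htot x y
  set a : Eℓ (Fin d → ℤ) := (⟨_, hmem x⟩ : Eℓ (Fin d → ℤ)) - ⟨_, hmem y⟩ with ha
  have h' : ‖a‖ₑ ^ 2 ≤ c ^ 2 * (((2 + ∑ i, ‖D i‖₊ ^ 2 : ℝ≥0) : ℝ≥0∞) * ‖x - y‖ₑ ^ 2) := by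
    rw [enorm_sq_eq]; exact h
  simp only [enorm_eq_nnnorm] at h' ⊢
  have h2 : ‖a‖₊ ^ 2 ≤ c ^ 2 * ((2 + ∑ i, ‖D i‖₊ ^ 2) * ‖x - y‖₊ ^ 2) := by exact_mod_cast h'
  have h3 : ‖a‖₊ ≤ c * NNReal.sqrt (2 + ∑ i, ‖D i‖₊ ^ 2) * ‖x - y‖₊ := by
    rw [← pow_le_pow_iff_left₀ (zero_le) (zero_le) two_ne_zero, mul_pow, mul_pow, NNReal.sq_sqrt,
      mul_assoc]
    exact h2
  exact_mod_cast h3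

end sig

/-! ### Time curves and the time scale -/

section curves
variable {d k : ℕ} {S : Set ℝ}

lemma contW_of {y : ℝ → Eℓ (Fin d → ℤ)} (hy : ContinuousOn y S) :
    ContW k S (fun t m => ((jap m ^ k : ℝ) : ℂ)⁻¹ * y t m) := by
  intro t ht
  have e : ∀ s, w2 k (fun m => ((jap m ^ k : ℝ) : ℂ)⁻¹ * y s m - ((jap m ^ k : ℝ) : ℂ)⁻¹ * y t m)
      = ‖y s - y t‖ₑ := fun s => w2_eq_enorm fun m => by
    rw [← mul_sub]; rfl
  simp_rw [e]
  have h : Tendsto (fun s => y s - y t) (nhdsWithin t S) (nhds 0) := by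
    simpa using (hy t ht).tendsto.sub_const (y t)
  simpa using h.enorm

lemma derivW_of {y y' : ℝ → Eℓ (Fin d → ℤ)} (hy : ∀ t ∈ S, HasDerivWithinAt y (y' t) S t) :
    DerivW k S (fun t m => ((jap m ^ k : ℝ) : ℂ)⁻¹ * y t m)
      (fun t m => ((jap m ^ k : ℝ) : ℂ)⁻¹ * y' t m) := by
  intro t ht
  have e : ∀ s, w2 k (fun m => (s - t)⁻¹ • (((jap m ^ k : ℝ) : ℂ)⁻¹ * y s m
      - ((jap m ^ k : ℝ) : ℂ)⁻¹ * y t m) - ((jap m ^ k : ℝ) : ℂ)⁻¹ * y' t m)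
      = ‖slope y t s - y' t‖ₑ := fun s => w2_eq_enorm fun m => by
    have : (slope y t s - y' t : Eℓ (Fin d → ℤ)) m
      = (s - t)⁻¹ • (y s m - y t m) - y' t m := rfl
    rw [this, Complex.real_smul, Complex.real_smul]
    ring
  simp_rw [e]
  have h := (hasDerivWithinAt_iff_tendsto_slope.1 (hy t ht)).sub_const (y' t)
  simpa using h.enorm

end curves

/-- The smallness condition `ε B e^{LT} ≤ r` holds on the time scale `√log(1/ε)`: for
`ε ≤ e⁻¹` this is at most `log(1/ε)`, so that `e^{LT} ≤ ε^{-1/2}` when `K = 1/(2L)`. -/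
lemma time_scale (L B r : ℝ) (hL : 0 < L) (hB : 0 ≤ B) (hr : 0 < r) :
    ∃ δ : ℝ, 0 < δ ∧ ∃ K : ℝ, 0 < K ∧ ∀ ε : ℝ, 0 < ε → ε < δ → ∀ T : ℝ,
      T < K * Real.sqrt (Real.log (1 / ε)) → ε * B * Real.exp (L * T) ≤ r := by
  refine ⟨min (Real.exp (-1)) ((r / (B + 1)) ^ 2), by positivity, 1 / (2 * L), by positivity,
    fun ε hε hεδ T hT => ?_⟩
  set l := Real.log (1 / ε) with hl
  have hl1 : 1 ≤ l := by
    rw [hl, Real.le_log_iff_exp_le (by positivity), le_div_iff₀ hε]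
    have := hεδ.le.trans (min_le_left _ _)
    calc Real.exp 1 * ε ≤ Real.exp 1 * Real.exp (-1) := by gcongr
      _ = 1 := by rw [← Real.exp_add]; simp
  have hs : Real.sqrt l ≤ l := by
    rw [Real.sqrt_le_left (by linarith)]; nlinarith
  have hLT : L * T ≤ l / 2 := by
    have h1 : L * T ≤ L * (1 / (2 * L) * Real.sqrt l) := by gcongr
    have h2 : L * (1 / (2 * L) * Real.sqrt l) = Real.sqrt l / 2 := by field_simp
    linarith
  have hE : Real.exp (l / 2) ^ 2 = 1 / ε := by
    rw [← Real.exp_nat_mul, hl]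
    push_cast
    rw [mul_div_cancel₀ _ (two_ne_zero), Real.exp_log (by positivity)]
  have h3 : ε * Real.exp (l / 2) ≤ r / (B + 1) := by
    refine (pow_le_pow_iff_left₀ (by positivity) (by positivity) two_ne_zero).1 ?_
    rw [mul_pow, hE]
    have := hεδ.le.trans (min_le_right _ _)
    calc ε ^ 2 * (1 / ε) = ε := by field_simp
      _ ≤ _ := this
  calc ε * B * Real.exp (L * T) ≤ ε * B * Real.exp (l / 2) := by gcongr
    _ = (ε * Real.exp (l / 2)) * B := by ring
    _ ≤ r / (B + 1) * B := by gcongr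
    _ ≤ r := by
      rw [div_mul_eq_mul_div, div_le_iff₀ (by positivity)]
      nlinarith

/-- long-time existence for the semilinear discrete wave equation
`∂ₜ²u - Δu = F(u,u')` with small data `εf, εg`: the maximal existence time satisfies
`T*(ε) ≥ K·√(log(1/ε))`, i.e. a classical solution exists on `[0,T]` for every
`T < K·√(log(1/ε))`. -/
theorem stmt14 (d : ℕ) (hd : 0 < d) (k : ℕ) (hk : k = 0 ∨ k = 1)
    (F : ℂ × (Fin (d + 1) → ℂ) → ℂ) (hF : ContDiff ℝ 1 F) (hF0 : F (0, 0) = 0)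
    (f g : (Fin d → ℤ) → ℂ) (hf : w2 k f < ⊤) (hg : w2 k g < ⊤) :
    ∃ δ : ℝ, 0 < δ ∧ ∃ K : ℝ, 0 < K ∧
      ∀ ε : ℝ, 0 < ε → ε < δ →
        ∀ T : ℝ, 0 < T → T < K * Real.sqrt (Real.log (1 / ε)) →
          ∃ u u1 u2,
            SLSol d k F (fun m => (ε : ℂ) * f m) (fun m => (ε : ℂ) * g m)
              (Set.Icc 0 T) u u1 u2 := by
  choose D hD using fun j : Fin d => exists_pd k hk j
  obtain ⟨Λ, hΛ⟩ := exists_lap (d := d) k hk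
  -- a globally Lipschitz nonlinearity which agrees with `F` on the unit ball
  have hloc : LocallyLipschitzOn (Metric.closedBall 0 1) F :=
    hF.locallyLipschitz.locallyLipschitzOn
  obtain ⟨c, hc⟩ := hloc.exists_lipschitzOnWith_of_compact (isCompact_closedBall _ _)
  have hΦ : LipschitzWith (c * 2) (F ∘ retr) := by
    rw [← lipschitzOnWith_univ]
    exact hc.comp retr_lipschitz.lipschitzOnWith fun x _ => by
      simpa using norm_retr_le_one x
  have hΦ0 : (F ∘ retr) 0 = 0 := by
    rw [Function.comp_apply, retr_of_le (by simp)]; exact hF0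
  have hΦ0 : (F ∘ retr) 0 = 0 := by
    rw [Function.comp_apply, retr_of_le (by simp)]; exact hF0
  obtain ⟨N, c', hN, hNf⟩ := exists_nonlin D k (F ∘ retr) _ hΦ hΦ0
  have hN0 : N 0 = 0 := by
    ext m
    rw [hNf, sig_zero, smul_zero, hΦ0, mul_zero]
    rfl
  let G : Eℓ (Fin d → ℤ) × Eℓ (Fin d → ℤ) → Eℓ (Fin d → ℤ) × Eℓ (Fin d → ℤ) :=
    fun x => (x.2, Λ x.1 + N x)
  obtain ⟨L, hL, hG⟩ : ∃ L : ℝ≥0, 0 < L ∧ LipschitzWith L G :=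
    ⟨_ + 1, by positivity, (LipschitzWith.prod_snd.prodMk
      ((Λ.lipschitz.comp LipschitzWith.prod_fst).add hN)).weaken le_self_add⟩
  have hG0 : G 0 = 0 := by simp [G, hN0]
  let x0 : Eℓ (Fin d → ℤ) × Eℓ (Fin d → ℤ) := (⟨_, memlp_of_w2 hf⟩, ⟨_, memlp_of_w2 hg⟩)
  set M : ℝ := ((NNReal.sqrt (2 + ∑ i, ‖D i‖₊ ^ 2) : ℝ≥0) : ℝ) with hM
  have hM0 : 0 ≤ M := NNReal.coe_nonneg _
  obtain ⟨δ, hδ, K, hK, hsmall⟩ := time_scale L ‖x0‖ (M + 1)⁻¹ hL (norm_nonneg _) (by positivity)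
  refine ⟨δ, hδ, K, hK, fun ε hε hεδ T hT hTK => ?_⟩
  have hsm : ‖ε • x0‖ * Real.exp (L * T) ≤ (M + 1)⁻¹ := by
    rw [norm_smul, Real.norm_of_nonneg hε.le]
    exact hsmall ε hε hεδ T hTK
  obtain ⟨x, hx0, hx⟩ := ode_exists G L hG hG0 (ε • x0) T hT
    (hsm.trans (inv_le_one_of_one_le₀ (by linarith)))
  have hxc : ContinuousOn x (Set.Icc 0 T) := fun t ht => (hx t ht).1.continuousWithinAt
  have hGc : ContinuousOn (fun t => G (x t)) (Set.Icc 0 T) := hG.continuous.comp_continuousOn hxc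
  have hfin : ∀ a : Eℓ (Fin d → ℤ), w2 k (fun m => ((jap m ^ k : ℝ) : ℂ)⁻¹ * a m) < ⊤ := fun a => by
    rw [w2_eq_enorm (a := a) fun m => rfl]; simp
  refine ⟨fun t m => ((jap m ^ k : ℝ) : ℂ)⁻¹ * (x t).1 m,
    fun t m => ((jap m ^ k : ℝ) : ℂ)⁻¹ * (x t).2 m,
    fun t m => ((jap m ^ k : ℝ) : ℂ)⁻¹ * (G (x t)).2 m,
    ⟨fun t _ => hfin _, fun t _ => hfin _, fun t _ => hfin _, contW_of hxc.fst, contW_of hxc.snd,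
      contW_of hGc.snd, derivW_of fun t ht => (hx t ht).1.fst,
      derivW_of fun t ht => (hx t ht).1.snd⟩, ?_, ?_, ?_⟩
  · intro t ht m
    have hw := japk_ne k m
    have hst : state (fun t m => ((jap m ^ k : ℝ) : ℂ)⁻¹ * (x t).1 m)
        (fun t m => ((jap m ^ k : ℝ) : ℂ)⁻¹ * (x t).2 m) t m
        = (jap m ^ k)⁻¹ • sig D (x t) m := by
      refine Prod.ext ?_ (funext fun i => ?_)
      · simp [state, sig]
      · refine Fin.cases ?_ (fun i => ?_) i
        · simp [state, sig]
        · simp only [state, sig, Prod.smul_snd, Pi.smul_apply, Fin.cons_succ]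
          rw [hD, Complex.real_smul, Complex.ofReal_inv, inv_mul_cancel_left₀ hw]
    have hle : ‖(jap m ^ k)⁻¹ • sig D (x t) m‖ ≤ 1 := by
      rw [norm_smul, norm_inv, Real.norm_of_nonneg (japk_pos k m).le]
      have h1 : (jap m ^ k)⁻¹ ≤ 1 := inv_le_one_of_one_le₀ (one_le_japk k m)
      have h2 : ‖sig D (x t) m‖ ≤ M * (M + 1)⁻¹ :=
        (norm_sig_le D (x t) m).trans
          (mul_le_mul_of_nonneg_left ((hx t ht).2.trans hsm) hM0)
      have h3 : M * (M + 1)⁻¹ ≤ 1 := by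
        rw [← div_eq_mul_inv, div_le_one (by positivity)]; linarith
      exact mul_le_one₀ h1 (norm_nonneg _) (h2.trans h3)
    have hu2 : (G (x t)).2 m = Λ (x t).1 m + N (x t) m := rfl
    rw [hst]
    beta_reduce
    rw [hu2, hΛ, hNf, Function.comp_apply, retr_of_le hle, mul_add,
      inv_mul_cancel_left₀ hw, inv_mul_cancel_left₀ hw, add_sub_cancel_left]
  · intro m
    have : (ε • x0).1 m = ε • (((jap m ^ k : ℝ) : ℂ) * f m) := rfl
    simp only [hx0, this, Complex.real_smul]
    rw [mul_left_comm, inv_mul_cancel_left₀ (japk_ne k m)]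
  · intro m
    have : (ε • x0).2 m = ε • (((jap m ^ k : ℝ) : ℂ) * g m) := rfl
    simp only [hx0, this, Complex.real_smul]
    rw [mul_left_comm, inv_mul_cancel_left₀ (japk_ne k m)]
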